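/- There exists a constant C > 0 with the following property. Let f, g ∈ SL(2,ℝ) be non-elliptic (|trace| ≥ 2 and not equal to ±identity), and suppose the subgroup Γ of SL(2,ℝ) generated by f and g is discrete and is not virtually abelian. Then there exist an element h ∈ Γ which is a product of at most C factors, each equal to f, f⁻¹, g, or g⁻¹, and a positive integer N ≤ C, such that the images of f^N and h in PSL(2,ℝ) = SL(2,ℝ)/{±1} generate a free group of rank two (the homomorphism from the free group on two generators to PSL(2,ℝ) determined by f^N and h is injective). -/

import Mathlib

open UpperHalfPlane

/-- `SL(2,ℝ)`. -/
abbrev SL2R := Matrix.SpecialLinearGroup (Fin 2) ℝ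

/-- A group is virtually abelian if it has an abelian finite-index subgroup. -/
def VirtuallyAbelian (G : Type*) [Group G] : Prop :=
  ∃ H : Subgroup G, H.FiniteIndex ∧ ∀ a ∈ H, ∀ b ∈ H, a * b = b * a

/-- A subgroup of `SL(2,ℝ)` is discrete if the identity is isolated in it. -/
def IsDiscreteSubgroup (Γ : Subgroup SL2R) : Prop :=
  ∃ U : Set (Matrix (Fin 2) (Fin 2) ℝ), IsOpen U ∧ (1 : Matrix (Fin 2) (Fin 2) ℝ) ∈ U ∧
    ∀ γ ∈ Γ, (γ : Matrix (Fin 2) (Fin 2) ℝ) ∈ U → γ = 1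

/-- An element of `SL(2,ℝ)` is non-elliptic iff `|trace| ≥ 2` and it is not `±1`. -/
def NonElliptic (g : SL2R) : Prop :=
  2 ≤ |Matrix.trace (g : Matrix (Fin 2) (Fin 2) ℝ)| ∧
    (g : Matrix (Fin 2) (Fin 2) ℝ) ≠ 1 ∧ (g : Matrix (Fin 2) (Fin 2) ℝ) ≠ -1

/-!
Write `β(A) = tr² A - 4` and `γ(A, B) = tr [A, B] - 2`. In a discrete group `γ(A, B) = 0` only
for commuting `A, B`, and Jørgensen's inequality `|β(A)| + |γ(A, B)| ≥ 1`, applied to `[f, g]` and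
`g`, bounds `γ(f, g)` away from zero for non-elliptic `f, g`, uniformly after squaring both of them:
`|γ(F, G)| ≥ 2` for `F = f²` and `G = g²`.

The trace of `F` times a conjugate of `F` or of `F⁻¹` is read off from `γ`:
`tr (F · k F k⁻¹) = β(F) + 2 - γ(F, k)` and `tr (F · k F⁻¹ k⁻¹) = γ(F, k) + 2`. Since
`γ(F, G²) = (β(G) + 4) γ(F, G)` and `γ(F, G F G⁻¹) = γ(F, G) (γ(F, G) - β(F))`, one of
`k = G², G F G⁻¹` makes one of these two traces at most `-2`.

Finally, if `tr F ≥ 2`, `tr h ≥ 2` and `tr (F h) ≤ -2`, then `F` and `h` play ping-pong on the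
projective line: in a basis `v, F v` with `v` an eigenvector of `h F` the four arcs are explicit.
The free group so obtained in `SL(2, ℝ)` is torsion-free, so it meets the center trivially.
-/

namespace QuantitativeTits

open scoped MatrixGroups commutatorElement

/-! ### Trace identities in `SL(2)` -/

section TraceIdentities

variable {R : Type*} [CommRing R] (A B C : SL(2, R))

/-- The trace as a function on `SL(2, R)`. -/
def tr : R := (A : Matrix (Fin 2) (Fin 2) R).trace

lemma tr_one : tr (1 : SL(2, R)) = 2 := by simp [tr]

lemma tr_mul_comm : tr (A * B) = tr (B * A) := by
  simp [tr, Matrix.trace_mul_comm A.1]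

lemma coe_inv_eq_tr_smul_one_sub : (A⁻¹).1 = tr A • (1 : Matrix (Fin 2) (Fin 2) R) - A.1 := by
  ext i j
  fin_cases i <;> fin_cases j <;>
    simp [Matrix.SpecialLinearGroup.SL2_inv_expl, tr, Matrix.trace_fin_two]

lemma tr_mul_inv : tr (A * B⁻¹) = tr A * tr B - tr (A * B) := by
  have h : (A * B⁻¹).1 = tr B • A.1 - A.1 * B.1 := by
    rw [Matrix.SpecialLinearGroup.coe_mul, coe_inv_eq_tr_smul_one_sub]
    simp [mul_sub]
  rw [tr, h]
  simp [tr, mul_comm]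

lemma tr_inv : tr A⁻¹ = tr A := by
  have h := tr_mul_inv 1 A
  rw [one_mul, one_mul, tr_one] at h
  rw [h]
  ring

lemma tr_conj : tr (B * A * B⁻¹) = tr A := by
  rw [tr_mul_comm, inv_mul_cancel_left]

lemma tr_sq : tr (A ^ 2) = tr A ^ 2 - 2 := by
  have h := tr_mul_inv A A
  rw [mul_inv_cancel, tr_one] at h
  rw [pow_two A]
  linear_combination h

lemma tr_sq_mul : tr (A ^ 2 * B) = tr A * tr (A * B) - tr B := by
  have h := tr_mul_inv (A * B) A
  rw [tr_mul_comm _ A, ← mul_assoc, ← pow_two, tr_conj] at h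
  linear_combination h

end TraceIdentities

/-! ### Gehring–Martin parameters -/

section Parameters

variable {R : Type*} [CommRing R] (A B C : SL(2, R))

/-- The Gehring–Martin parameter `β(A) = tr² A - 4`, the discriminant of the characteristic
polynomial of `A`; over `ℝ` its sign tells elliptic, parabolic and hyperbolic elements apart. -/
def beta : R := tr A ^ 2 - 4

/-- The Gehring–Martin commutator parameter `γ(A, B) = tr [A, B] - 2`. -/
def gamma : R := tr ⁅A, B⁆ - 2

lemma gamma_comm : gamma A B = gamma B A := by
  rw [gamma, gamma, ← commutatorElement_inv, tr_inv]

lemma tr_mul_conj : tr (A * (B * A * B⁻¹)) = beta A + 2 - gamma A B := by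
  have h := tr_mul_inv (B * A * B⁻¹) A
  rw [← commutatorElement_def, tr_conj, tr_mul_comm _ A] at h
  rw [gamma_comm, gamma, beta]
  linear_combination h

lemma gamma_eq_fricke :
    gamma A B = tr A ^ 2 + tr B ^ 2 + tr (A * B) ^ 2 - tr A * tr B * tr (A * B) - 4 := by
  have h : tr (A * (B * A * B⁻¹)) = tr (A ^ 2 * B) * tr B - tr ((A * B) ^ 2) := by
    rw [← mul_assoc, ← mul_assoc, tr_mul_inv, tr_mul_comm (A * B) A, ← mul_assoc, ← pow_two,
      mul_assoc (A * B), ← pow_two]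
  rw [tr_mul_conj, tr_sq_mul, tr_sq, beta] at h
  linear_combination -h

lemma gamma_conj : gamma (C * A * C⁻¹) (C * B * C⁻¹) = gamma A B := by
  rw [gamma, ← conjugate_commutatorElement, tr_conj, gamma]

lemma gamma_conj_right : gamma A (B * A * B⁻¹) = gamma A B * (gamma A B - beta A) := by
  rw [gamma_eq_fricke A (B * A * B⁻¹), tr_mul_conj, tr_conj, beta]
  ring

lemma beta_sq : beta (A ^ 2) = (beta A + 4) * beta A := by
  rw [beta, beta, tr_sq]
  ring

lemma gamma_sq_left : gamma (A ^ 2) B = (beta A + 4) * gamma A B := by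
  rw [gamma_eq_fricke, gamma_eq_fricke, tr_sq_mul, tr_sq, beta]
  ring

lemma gamma_sq_right : gamma A (B ^ 2) = (beta B + 4) * gamma A B := by
  rw [gamma_comm, gamma_sq_left, gamma_comm]

lemma beta_commutator : beta ⁅A, B⁆ = gamma A B * (gamma A B + 4) := by
  rw [beta, gamma]
  ring

lemma gamma_commutator : gamma ⁅A, B⁆ B = gamma A B * (gamma A B - beta B) := by
  have h : tr (⁅A, B⁆ * B) = tr B := by
    rw [commutatorElement_def, inv_mul_cancel_right, tr_conj]
  rw [gamma_eq_fricke, h, gamma, beta]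
  ring

variable {A C}

lemma gamma_mul_left_of_commute (h : Commute A C) : gamma A (C * B) = gamma A B := by
  have h' : ⁅A, C * B⁆ = C * ⁅A, B⁆ * C⁻¹ := by
    calc ⁅A, C * B⁆ = A * C * (B * A⁻¹ * B⁻¹) * C⁻¹ := by group
    _ = C * ⁅A, B⁆ * C⁻¹ := by rw [h.eq]; group
  rw [gamma, h', tr_conj, gamma]

lemma gamma_mul_right_of_commute (h : Commute A C) : gamma A (B * C) = gamma A B := by
  have h' : ⁅A, B * C⁆ = ⁅A, B⁆ := by
    calc ⁅A, B * C⁆ = A * B * (C * A⁻¹) * C⁻¹ * B⁻¹ := by group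
    _ = ⁅A, B⁆ := by rw [← h.inv_left.eq]; group
  rw [gamma, h', gamma]

lemma gamma_eq_zero_of_commute (h : Commute A C) : gamma A C = 0 := by
  rw [gamma, commutatorElement_eq_one_iff_commute.2 h, tr_one, sub_self]

end Parameters

/-! ### Commuting elements -/

section Commuting

lemma mul_add_mul_eq_polarized_cayley_hamilton {R : Type*} [CommRing R] (A B : SL(2, R)) :
    A.1 * B.1 + B.1 * A.1 =
      tr A • B.1 + tr B • A.1 + (tr (A * B) - tr A * tr B) • (1 : Matrix (Fin 2) (Fin 2) R) := by
  ext i j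
  fin_cases i <;> fin_cases j <;>
    simp [tr, Matrix.trace_fin_two, Matrix.mul_apply, Fin.sum_univ_two] <;> ring

variable {K : Type*} [Field K] {A B : SL(2, K)}

lemma eq_one_of_commute_of_tr_eq_two (hA : beta A ≠ 0) (hAB : Commute A B) (hB : tr B = 2) :
    B = 1 := by
  have htr : tr (A * B) = tr A := by
    have h := gamma_eq_zero_of_commute hAB
    rw [gamma_eq_fricke, hB] at h
    have : (tr (A * B) - tr A) ^ 2 = 0 := by linear_combination h
    exact sub_eq_zero.1 (pow_eq_zero_iff two_ne_zero |>.1 this)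
  have hAA := mul_add_mul_eq_polarized_cayley_hamilton A A
  have hpol := mul_add_mul_eq_polarized_cayley_hamilton A B
  have hcomm : A.1 * B.1 = B.1 * A.1 := congrArg Subtype.val hAB.eq
  rw [← pow_two A, tr_sq] at hAA
  rw [← hcomm, htr, hB] at hpol
  set D : Matrix (Fin 2) (Fin 2) K := (2 : K) • A.1 - tr A • 1 with hD
  have hDB : D * (B.1 - 1) = 0 := by
    simp only [hD, sub_mul, mul_sub, smul_mul_assoc, one_mul, mul_one]
    linear_combination (norm := module) hpol
  have hDD : D * D = beta A • 1 := by
    simp only [hD, sub_mul, mul_sub, smul_mul_assoc, mul_smul_comm, one_mul, mul_one, beta]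
    linear_combination (norm := module) (2 : K) • hAA
  have h : beta A • (B.1 - 1) = 0 := by
    rw [← one_mul (B.1 - 1), ← smul_mul_assoc, ← hDD, mul_assoc, hDB, mul_zero]
  exact Subtype.ext (sub_eq_zero.1 ((smul_eq_zero.1 h).resolve_left hA))

lemma not_commute_conj (hA : beta A ≠ 0) (hAB : gamma A B ≠ 0) (hB : tr B ≠ 0) :
    ¬ Commute A (B * A * B⁻¹) := by
  intro h
  have hγ : gamma A B = beta A := by
    have h₀ := gamma_conj_right A B
    rw [gamma_eq_zero_of_commute h, eq_comm, mul_eq_zero] at h₀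
    exact sub_eq_zero.1 (h₀.resolve_left hAB)
  have hinv : A * (B * A * B⁻¹) = 1 := by
    refine eq_one_of_commute_of_tr_eq_two hA ((Commute.refl A).mul_right h) ?_
    rw [tr_mul_conj, hγ, add_sub_cancel_left]
  have hABA : A * B * A = B := by
    simpa [← mul_assoc, mul_inv_eq_one] using hinv
  have h₁ : tr A * tr (A * B) = 2 * tr B := by
    have h₁ := tr_sq_mul A B
    rw [pow_two, mul_assoc, tr_mul_comm, hABA] at h₁
    linear_combination -h₁
  have h₂ : 2 * tr (A * B) = tr A * tr B := by
    have h₂ := tr_mul_inv B A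
    rw [← eq_mul_inv_of_mul_eq hABA, tr_mul_comm B A] at h₂
    linear_combination h₂
  refine mul_ne_zero hA hB ?_
  rw [beta]
  linear_combination 2 * h₁ - tr A * h₂

end Commuting

/-! ### Triangular forms -/

section Triangular

lemma det_fin_two_eq_one {R : Type*} [CommRing R] (A : SL(2, R)) :
    A 0 0 * A 1 1 - A 0 1 * A 1 0 = 1 := by
  rw [← Matrix.det_fin_two, A.det_coe]

/-- The upper unipotent matrix with off-diagonal entry `u`. -/
abbrev shear {R : Type*} [CommRing R] (u : R) : SL(2, R) :=
  Matrix.SpecialLinearGroup.transvection (zero_ne_one : (0 : Fin 2) ≠ 1) u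

lemma coe_shear {R : Type*} [CommRing R] (u : R) : (shear u).1 = !![1, u; 0, 1] := by
  ext i j
  fin_cases i <;> fin_cases j <;> simp [Matrix.SpecialLinearGroup.transvection_coe]

lemma tr_shear_mul {R : Type*} [CommRing R] (u : R) (B : SL(2, R)) :
    tr (shear u * B) = tr B + u * B 1 0 := by
  rw [tr, tr, Matrix.SpecialLinearGroup.coe_mul, coe_shear, Matrix.trace_fin_two,
    Matrix.trace_fin_two, Matrix.eta_fin_two B.1, Matrix.mul_fin_two]
  simp only [Matrix.of_apply, Matrix.cons_val_zero, Matrix.cons_val_one]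
  ring

lemma conj_shear {R : Type*} [CommRing R] {E : SL(2, R)} (hE : E 1 0 = 0) (u : R) :
    E * shear u * E⁻¹ = shear (E 0 0 ^ 2 * u) := by
  have hdet := det_fin_two_eq_one E
  rw [hE, mul_zero, sub_zero] at hdet
  rw [mul_inv_eq_iff_eq_mul]
  apply Subtype.ext
  rw [Matrix.SpecialLinearGroup.coe_mul, Matrix.SpecialLinearGroup.coe_mul, coe_shear, coe_shear]
  ext i j
  fin_cases i <;> fin_cases j <;> simp [Matrix.mul_apply, Fin.sum_univ_two, hE]
  linear_combination -(E 0 0 * u) * hdet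

variable {K : Type*} [Field K]

lemma exists_mulVec_eq_smul {A : SL(2, K)} {l : K} (hl : l ^ 2 - tr A * l + 1 = 0) :
    ∃ v ≠ 0, A.1.mulVec v = l • v := by
  have hdet : (A.1 - l • (1 : Matrix (Fin 2) (Fin 2) K)).det = 0 := by
    have h := A.det_coe
    rw [Matrix.det_fin_two] at h
    simp only [Matrix.det_fin_two, Matrix.sub_apply, Matrix.smul_apply, Matrix.one_apply_eq,
      Matrix.one_apply_ne zero_ne_one, Matrix.one_apply_ne one_ne_zero, smul_eq_mul, tr,
      Matrix.trace_fin_two] at hl ⊢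
    linear_combination h + hl
  obtain ⟨v, hv, h⟩ := Matrix.exists_mulVec_eq_zero_iff.2 hdet
  refine ⟨v, hv, ?_⟩
  rwa [Matrix.sub_mulVec, Matrix.smul_mulVec, Matrix.one_mulVec, sub_eq_zero] at h

lemma exists_conj_upper_triangular {A : SL(2, K)} {l : K} (hl : l ^ 2 - tr A * l + 1 = 0) :
    ∃ P : SL(2, K), (P * A * P⁻¹) 0 0 = l ∧ (P * A * P⁻¹) 1 0 = 0 := by
  obtain ⟨v, hv, hAv⟩ := exists_mulVec_eq_smul hl
  have h₀ : A 0 0 * v 0 + A 0 1 * v 1 = l * v 0 := by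
    simpa [Matrix.mulVec, dotProduct] using congrFun hAv 0
  have h₁ : A 1 0 * v 0 + A 1 1 * v 1 = l * v 1 := by
    simpa [Matrix.mulVec, dotProduct] using congrFun hAv 1
  have hcop : IsCoprime (v 0) (v 1) := by
    rw [Semifield.isCoprime_iff]
    contrapose! hv
    ext i
    fin_cases i
    exacts [hv.1, hv.2]
  obtain ⟨Q, hQ₀, hQ₁⟩ := hcop.exists_SL2_col 0
  have hQ := det_fin_two_eq_one Q
  rw [← hQ₀, ← hQ₁] at h₀ h₁
  refine ⟨Q⁻¹, ?_, ?_⟩ <;> rw [inv_inv]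
  · simp [Matrix.mul_apply, Matrix.adjugate_fin_two, Fin.sum_univ_two, Matrix.vecMul, dotProduct]
    linear_combination l * hQ + Q 1 1 * h₀ - Q 0 1 * h₁
  · simp [Matrix.mul_apply, Matrix.adjugate_fin_two, Fin.sum_univ_two, Matrix.vecMul, dotProduct]
    linear_combination -Q 1 0 * h₀ + Q 0 0 * h₁

lemma exists_conj_eq_shear {A : SL(2, K)} (hA : tr A = 2) :
    ∃ (P : SL(2, K)) (u : K), P * A * P⁻¹ = shear u := by
  obtain ⟨P, h₀, h₁⟩ := exists_conj_upper_triangular (A := A) (l := 1) (by rw [hA]; ring)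
  have hdet := det_fin_two_eq_one (P * A * P⁻¹)
  rw [h₀, h₁, one_mul, mul_zero, sub_zero] at hdet
  refine ⟨P, (P * A * P⁻¹) 0 1, Subtype.ext ?_⟩
  rw [coe_shear]
  ext i j
  fin_cases i <;> fin_cases j
  exacts [h₀, rfl, h₁, hdet]

lemma upper_triangular_of_commutator_eq_shear {A B : SL(2, K)} {u : K} (hu : u ≠ 0)
    (h : ⁅A, B⁆ = shear u) : A 1 0 = 0 ∧ B 1 0 = 0 := by
  constructor
  · have hinv : ⁅B, A⁆ = shear (-u) := by
      rw [← commutatorElement_inv, h]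
      exact Matrix.SpecialLinearGroup.transvection_inv _ u
    have htr := tr_shear_mul (-u) A
    rw [← hinv, commutatorElement_def, inv_mul_cancel_right, tr_conj] at htr
    simpa [hu] using htr
  · have htr := tr_shear_mul u B
    rw [← h, commutatorElement_def, inv_mul_cancel_right, tr_conj] at htr
    simpa [hu] using htr

end Triangular

/-! ### Reducible pairs in discrete groups -/

section Reducible

variable {Γ : Subgroup SL2R} {A B : SL2R}

lemma isDiscreteSubgroup_map_conj (hΓ : IsDiscreteSubgroup Γ) (P : SL2R) :
    IsDiscreteSubgroup (Γ.map (MulAut.conj P).toMonoidHom) := by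
  obtain ⟨U, hU, h1U, hΓU⟩ := hΓ
  have hconj (γ : SL2R) : P⁻¹.1 * (P * γ * P⁻¹).1 * P.1 = γ.1 :=
    congrArg Subtype.val (by group : P⁻¹ * (P * γ * P⁻¹) * P = γ)
  refine ⟨(fun M ↦ P⁻¹.1 * M * P.1) ⁻¹' U, hU.preimage (by fun_prop), ?_, ?_⟩
  · rwa [← Matrix.SpecialLinearGroup.coe_one, ← hconj, mul_one, mul_inv_cancel] at h1U
  · rintro - ⟨γ, hγ, rfl⟩ hmem
    have : γ = 1 := hΓU γ hγ (hconj γ ▸ hmem)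
    rw [this, map_one]

lemma sq_apply_zero_eq_one_of_shear_mem {u : ℝ} (hΓ : IsDiscreteSubgroup Γ) (hu : u ≠ 0)
    (huΓ : shear u ∈ Γ) (hA : A ∈ Γ) (hA₁₀ : A 1 0 = 0) : A 0 0 ^ 2 = 1 := by
  have hdet : A 0 0 * A 1 1 = 1 := by simpa [hA₁₀] using det_fin_two_eq_one A
  by_contra hne
  wlog hlt : A 0 0 ^ 2 < 1 generalizing A
  · have hgt : 1 < A 0 0 ^ 2 := lt_of_le_of_ne (not_lt.1 hlt) (Ne.symm hne)
    have hlt' : A 1 1 ^ 2 < 1 := by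
      have h1 : A 0 0 ^ 2 * A 1 1 ^ 2 = 1 := by rw [← mul_pow, hdet, one_pow]
      nlinarith [sq_nonneg (A 1 1)]
    have h₀₀ : A⁻¹ 0 0 = A 1 1 := by simp [Matrix.adjugate_fin_two]
    have h₁₁ : A⁻¹ 1 1 = A 0 0 := by simp [Matrix.adjugate_fin_two]
    refine this (inv_mem hA) (by simp [Matrix.adjugate_fin_two, hA₁₀]) ?_ ?_ ?_
    · rw [h₀₀, h₁₁, mul_comm, hdet]
    · rw [h₀₀]; exact hlt'.ne
    · rwa [h₀₀]
  obtain ⟨U, hU, h1U, hΓU⟩ := hΓ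
  have hmem (n : ℕ) : shear ((A 0 0 ^ 2) ^ n * u) ∈ Γ := by
    induction n with
    | zero => simpa using huΓ
    | succ n ih =>
      rw [pow_succ', mul_assoc, ← conj_shear hA₁₀]
      exact mul_mem (mul_mem hA ih) (inv_mem hA)
  have hlim : Filter.Tendsto (fun n : ℕ ↦ (shear ((A 0 0 ^ 2) ^ n * u)).1) Filter.atTop
      (nhds (!![1, 0 * u; 0, 1])) := by
    simp only [coe_shear]
    have hc : Continuous fun x : ℝ ↦ !![1, x; 0, 1] := by fun_prop
    exact (hc.tendsto _).comp
      ((tendsto_pow_atTop_nhds_zero_of_lt_one (sq_nonneg _) hlt).mul_const u)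
  rw [zero_mul, ← Matrix.one_fin_two] at hlim
  obtain ⟨n, hn⟩ := (hlim.eventually (hU.mem_nhds h1U)).exists
  have h : (A 0 0 ^ 2) ^ n * u = 0 := by
    have h := congrArg (fun B : SL2R ↦ B.1 0 1) (hΓU _ (hmem n) hn)
    simpa [coe_shear] using h
  refine mul_ne_zero (pow_ne_zero n (pow_ne_zero 2 ?_)) hu h
  exact left_ne_zero_of_mul_eq_one hdet

lemma commute_of_upper_triangular {R : Type*} [CommRing R] {A B : SL(2, R)} (hA : A 1 0 = 0)
    (hB : B 1 0 = 0) (hA' : A 0 0 ^ 2 = 1) (hB' : B 0 0 ^ 2 = 1) : Commute A B := by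
  have hAd := det_fin_two_eq_one A
  have hBd := det_fin_two_eq_one B
  have hA₁₁ : A 1 1 = A 0 0 := by
    linear_combination (-A 1 1) * hA' + A 0 0 * hAd + A 0 0 * A 0 1 * hA
  have hB₁₁ : B 1 1 = B 0 0 := by
    linear_combination (-B 1 1) * hB' + B 0 0 * hBd + B 0 0 * B 0 1 * hB
  ext i j
  fin_cases i <;> fin_cases j <;>
    simp [Matrix.mul_apply, Fin.sum_univ_two, hA, hB, hA₁₁, hB₁₁] <;> ring

lemma commute_of_gamma_eq_zero (hΓ : IsDiscreteSubgroup Γ) (hA : A ∈ Γ) (hB : B ∈ Γ)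
    (h : gamma A B = 0) : Commute A B := by
  obtain ⟨P, u, hP⟩ := exists_conj_eq_shear (A := ⁅A, B⁆) (by rwa [gamma, sub_eq_zero] at h)
  rw [conjugate_commutatorElement] at hP
  have hΓ' := isDiscreteSubgroup_map_conj hΓ P
  have hA' := Subgroup.mem_map_of_mem (MulAut.conj P).toMonoidHom hA
  have hB' := Subgroup.mem_map_of_mem (MulAut.conj P).toMonoidHom hB
  simp only [MulEquiv.toMonoidHom_eq_coe, MonoidHom.coe_coe, MulAut.conj_apply] at hA' hB'
  suffices h : Commute (P * A * P⁻¹) (P * B * P⁻¹) by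
    exact (MulAut.conj P).injective (by simpa using h.eq)
  generalize P * A * P⁻¹ = A', P * B * P⁻¹ = B' at hP hA' hB' ⊢
  obtain rfl | hu := eq_or_ne u 0
  · exact commutatorElement_eq_one_iff_commute.1
      (hP.trans (Matrix.SpecialLinearGroup.transvection_coeff_zero _))
  have huΓ : shear u ∈ Γ.map (MulAut.conj P).toMonoidHom := by
    rw [← hP]
    exact mul_mem (mul_mem (mul_mem hA' hB') (inv_mem hA')) (inv_mem hB')
  obtain ⟨hA₁₀, hB₁₀⟩ := upper_triangular_of_commutator_eq_shear hu hP
  exact commute_of_upper_triangular hA₁₀ hB₁₀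
    (sq_apply_zero_eq_one_of_shear_mem hΓ' hu huΓ hA' hA₁₀)
    (sq_apply_zero_eq_one_of_shear_mem hΓ' hu huΓ hB' hB₁₀)

end Reducible

/-! ### Properness of `γ(A, ·)` modulo powers of `A` -/

section Proper

lemma isCompact_setOf_abs_apply_le (r : ℝ) : IsCompact {B : SL2R | ∀ i j, |B i j| ≤ r} := by
  have h : IsCompact {B : Matrix (Fin 2) (Fin 2) ℝ | ∀ i j, |B i j| ≤ r} := by
    have h := isCompact_univ_pi fun _ : Fin 2 ↦ isCompact_univ_pi fun _ : Fin 2 ↦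
      isCompact_Icc (a := -r) (b := r)
    simp only [Set.pi, Set.mem_univ, true_imp_iff, Set.mem_Icc, ← abs_le] at h
    exact h
  exact Matrix.SpecialLinearGroup.isClosedEmbedding_val.isCompact_preimage h

/-- The function `γ(A, ·)` is proper modulo left and right multiplication by powers of `A`. -/
def GammaProper (A : SL2R) : Prop :=
  ∀ M : ℝ, ∃ K : Set SL2R, IsCompact K ∧
    ∀ B, |gamma A B| ≤ M → ∃ i j : ℤ, A ^ i * B * A ^ j ∈ K

lemma GammaProper.of_conj {A P : SL2R} (h : GammaProper (P * A * P⁻¹)) : GammaProper A := by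
  intro M
  obtain ⟨K, hK, hKB⟩ := h M
  refine ⟨(fun B ↦ P⁻¹ * B * P) '' K, hK.image (by fun_prop), fun B hB ↦ ?_⟩
  obtain ⟨i, j, hij⟩ := hKB (P * B * P⁻¹) (by rwa [gamma_conj])
  refine ⟨i, j, _, hij, ?_⟩
  rw [conj_zpow, conj_zpow]
  group

lemma gamma_of_rotation {A : SL2R} (h₁ : A 1 1 = A 0 0) (h₂ : A 0 1 = -A 1 0) (B : SL2R) :
    gamma A B = A 1 0 ^ 2 * ((B 0 0 - B 1 1) ^ 2 + (B 0 1 + B 1 0) ^ 2) := by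
  have hA := det_fin_two_eq_one A
  have hB := det_fin_two_eq_one B
  rw [h₁, h₂] at hA
  rw [gamma_eq_fricke]
  simp only [tr, Matrix.SpecialLinearGroup.coe_mul, Matrix.trace_fin_two, Matrix.mul_apply,
    Fin.sum_univ_two, h₁, h₂]
  linear_combination (4 - (B 0 0 + B 1 1) ^ 2) * hA + 4 * A 1 0 ^ 2 * hB

lemma gammaProper_of_rotation {A : SL2R} (h₁ : A 1 1 = A 0 0) (h₂ : A 0 1 = -A 1 0)
    (h₃ : A 1 0 ≠ 0) : GammaProper A := by
  intro M
  refine ⟨_, isCompact_setOf_abs_apply_le (M / A 1 0 ^ 2 + 2), fun B hB ↦ ⟨0, 0, ?_⟩⟩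
  rw [zpow_zero, one_mul, mul_one]
  have hdet := det_fin_two_eq_one B
  have hsum : B 0 0 ^ 2 + B 0 1 ^ 2 + B 1 0 ^ 2 + B 1 1 ^ 2 ≤ M / A 1 0 ^ 2 + 2 := by
    have h : (B 0 0 - B 1 1) ^ 2 + (B 0 1 + B 1 0) ^ 2 ≤ M / A 1 0 ^ 2 := by
      rw [le_div_iff₀' (by positivity), ← gamma_of_rotation h₁ h₂]
      exact (le_abs_self _).trans hB
    linear_combination h + 2 * hdet
  have hM : 0 ≤ M / A 1 0 ^ 2 := div_nonneg ((abs_nonneg _).trans hB) (sq_nonneg _)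
  have hle (i j : Fin 2) : B i j ^ 2 ≤ M / A 1 0 ^ 2 + 2 := by
    refine le_trans ?_ hsum
    fin_cases i <;> fin_cases j <;> simp only [Fin.zero_eta, Fin.mk_one] <;>
      linarith [sq_nonneg (B 0 0), sq_nonneg (B 0 1), sq_nonneg (B 1 0), sq_nonneg (B 1 1)]
  exact fun i j ↦ abs_le_of_sq_le_sq ((hle i j).trans (by nlinarith)) (by linarith)

lemma exists_half_tr_and_sq_eq {A : SL2R} (hA : beta A < 0) :
    ∃ a s : ℝ, A 0 0 + A 1 1 = 2 * a ∧ s ^ 2 = 1 - a ^ 2 ∧ 0 < s / A 1 0 := by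
  have hdet := det_fin_two_eq_one A
  obtain ⟨a, ha⟩ : ∃ a, A 0 0 + A 1 1 = 2 * a := ⟨(A 0 0 + A 1 1) / 2, by ring⟩
  have ha1 : 0 < 1 - a ^ 2 := by
    rw [beta, tr, Matrix.trace_fin_two, ha] at hA
    linarith
  have hc : A 1 0 ≠ 0 := by
    intro hc
    rw [hc, mul_zero, sub_zero] at hdet
    linarith [sq_nonneg (A 0 0 - A 1 1), congrArg (· ^ 2) ha]
  have hsqrt := Real.sqrt_pos.2 ha1
  obtain hc | hc := hc.lt_or_gt
  · exact ⟨a, -√(1 - a ^ 2), ha, by rw [neg_sq, Real.sq_sqrt ha1.le],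
      div_pos_of_neg_of_neg (neg_neg_of_pos hsqrt) hc⟩
  · exact ⟨a, √(1 - a ^ 2), ha, Real.sq_sqrt ha1.le, div_pos hsqrt hc⟩

lemma exists_conj_rotation {A : SL2R} (hA : beta A < 0) :
    ∃ P : SL2R, (P * A * P⁻¹) 1 1 = (P * A * P⁻¹) 0 0 ∧ (P * A * P⁻¹) 0 1 = -(P * A * P⁻¹) 1 0 ∧
      (P * A * P⁻¹) 1 0 ≠ 0 := by
  have hdet := det_fin_two_eq_one A
  obtain ⟨a, s, ha, hs, hsc⟩ := exists_half_tr_and_sq_eq hA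
  have hc : A 1 0 ≠ 0 := fun h ↦ by simp [h] at hsc
  have hs₀ : s ≠ 0 := fun h ↦ by simp [h] at hsc
  obtain ⟨r, hr⟩ : ∃ r : ℝ, r ^ 2 = s / A 1 0 := ⟨√(s / A 1 0), Real.sq_sqrt hsc.le⟩
  -- `Q` maps the fixed point `i` of `D` to the fixed point of `A` in the upper half-plane.
  let Q : SL2R := ⟨!![r, r * (A 0 0 - a) / s; 0, r * A 1 0 / s], by
    rw [Matrix.det_fin_two_of, mul_zero, sub_zero, mul_div_assoc, ← mul_assoc, ← pow_two, hr]
    field_simp⟩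
  let D : SL2R := ⟨!![a, -s; s, a], by
    rw [Matrix.det_fin_two_of]
    linear_combination hs⟩
  have hQ : A * Q = Q * D := by
    apply Subtype.ext
    rw [Matrix.SpecialLinearGroup.coe_mul, Matrix.SpecialLinearGroup.coe_mul,
      Matrix.eta_fin_two A.1, Matrix.mul_fin_two, Matrix.mul_fin_two]
    simp only [mul_zero, add_zero, mul_neg, zero_mul, zero_add, EmbeddingLike.apply_eq_iff_eq,
      Matrix.vecCons_inj, and_true]
    field_simp
    refine ⟨⟨by ring, ?_⟩, trivial, ?_⟩
    · linear_combination r * A 0 0 * ha - r * hdet + r * hs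
    · linear_combination r * A 1 0 * ha
  refine ⟨Q⁻¹, ?_⟩
  rw [inv_inv, mul_assoc, hQ, inv_mul_cancel_left]
  exact ⟨rfl, rfl, hs₀⟩

/-- The diagonal matrices `diag(u, u⁻¹)`. -/
def diagHom {R : Type*} [CommRing R] : Rˣ →* SL(2, R) where
  toFun u := ⟨!![(u : R), 0; 0, (u⁻¹ : Rˣ)], by simp⟩
  map_one' := by
    ext i j
    fin_cases i <;> fin_cases j <;> simp
  map_mul' u v := by
    apply Subtype.ext
    change _ = !![(u : R), 0; 0, (u⁻¹ : Rˣ)] * !![(v : R), 0; 0, (v⁻¹ : Rˣ)]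
    simp [mul_comm]

lemma coe_diagHom {R : Type*} [CommRing R] (u : Rˣ) :
    (diagHom u).1 = !![(u : R), 0; 0, (u⁻¹ : Rˣ)] := rfl

lemma gamma_diagHom {R : Type*} [CommRing R] (u : Rˣ) (B : SL(2, R)) :
    gamma (diagHom u) B = -((u : R) - (u⁻¹ : Rˣ)) ^ 2 * (B 0 1 * B 1 0) := by
  have hB := det_fin_two_eq_one B
  have hu := u.mul_inv
  rw [gamma_eq_fricke]
  simp only [tr, Matrix.SpecialLinearGroup.coe_mul, coe_diagHom, Matrix.trace_fin_two,
    Matrix.mul_apply, Fin.sum_univ_two, Matrix.of_apply, Matrix.cons_val_zero,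
    Matrix.cons_val_one, zero_mul, add_zero, zero_add]
  linear_combination (4 - (B 0 0 + B 1 1) ^ 2) * hu - ((u : R) - (u⁻¹ : Rˣ)) ^ 2 * hB

lemma exists_zpow_abs_mul_le {r M x y : ℝ} (hr : 1 < r) (hM : 0 < M) (hxy : |x * y| ≤ M) :
    ∃ k : ℤ, |x * r ^ k| ≤ r ∧ |y * r ^ (-k)| ≤ M := by
  have hr₀ : 0 < r := one_pos.trans hr
  obtain rfl | hx := eq_or_ne x 0
  · obtain ⟨k, hk⟩ := pow_unbounded_of_one_lt (|y| / M) hr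
    refine ⟨k, by simpa using hr₀.le, ?_⟩
    rw [abs_mul, zpow_neg, zpow_natCast, abs_of_pos (inv_pos.2 (pow_pos hr₀ k)),
      ← div_eq_mul_inv, div_le_iff₀ (pow_pos hr₀ k)]
    exact ((div_lt_iff₀' hM).1 hk).le
  · obtain ⟨n, hn, hn'⟩ := exists_mem_Ico_zpow (abs_pos.2 hx) hr
    refine ⟨-n, ?_, ?_⟩
    · rw [abs_mul, abs_of_pos (zpow_pos hr₀ _), zpow_neg, ← div_eq_mul_inv,
        div_le_iff₀ (zpow_pos hr₀ n), ← zpow_one_add₀ hr₀.ne', add_comm]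
      exact hn'.le
    · rw [abs_mul, neg_neg, abs_of_pos (zpow_pos hr₀ n)]
      calc |y| * r ^ n ≤ |y| * |x| := by gcongr
        _ ≤ M := by rwa [mul_comm, ← abs_mul]

lemma coe_zpow_diagHom_mul_mul {K : Type*} [Field K] (u : Kˣ) (B : SL(2, K)) (p q : ℤ) :
    (diagHom u ^ (p + q) * B * diagHom u ^ (p - q)).1 =
      !![B 0 0 * ((u : K) ^ 2) ^ p, B 0 1 * ((u : K) ^ 2) ^ q;
        B 1 0 * ((u : K) ^ 2) ^ (-q), B 1 1 * ((u : K) ^ 2) ^ (-p)] := by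
  have hu := u.ne_zero
  rw [← map_zpow, ← map_zpow, Matrix.SpecialLinearGroup.coe_mul, Matrix.SpecialLinearGroup.coe_mul,
    coe_diagHom, coe_diagHom, Matrix.eta_fin_two B.1, Matrix.mul_fin_two, Matrix.mul_fin_two]
  have hp := zpow_ne_zero p hu
  have hq := zpow_ne_zero q hu
  simp only [Units.val_zpow_eq_zpow_val, Units.val_inv_eq_inv_val, zpow_add₀ hu, zpow_sub₀ hu,
    zpow_neg, pow_two, mul_zpow]
  ext i j
  fin_cases i <;> fin_cases j <;> simp <;> field_simp

lemma gammaProper_diagHom {u : ℝˣ} (hu : 1 < (u : ℝ) ^ 2) : GammaProper (diagHom u) := by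
  intro M
  have hd : 0 < ((u : ℝ) - (u⁻¹ : ℝˣ)) ^ 2 := by
    refine sq_pos_of_ne_zero (sub_ne_zero.2 fun h ↦ hu.ne' ?_)
    rw [pow_two]
    nth_rewrite 2 [h]
    exact u.mul_inv
  set d := ((u : ℝ) - (u⁻¹ : ℝˣ)) ^ 2
  refine ⟨_, isCompact_setOf_abs_apply_le (u ^ 2 + (1 + M / d)), fun B hB ↦ ?_⟩
  have hM : 0 ≤ M / d := div_nonneg ((abs_nonneg _).trans hB) hd.le
  have hoff : |B 0 1 * B 1 0| ≤ M / d := by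
    rw [le_div_iff₀' hd, ← abs_of_pos hd, ← abs_mul, ← abs_neg, ← neg_mul, ← gamma_diagHom]
    exact hB
  have hdiag : |B 0 0 * B 1 1| ≤ 1 + M / d := by
    rw [sub_eq_iff_eq_add.1 (det_fin_two_eq_one B)]
    exact (abs_add_le _ _).trans (by rw [abs_one]; gcongr)
  obtain ⟨p, hp₀, hp₁⟩ := exists_zpow_abs_mul_le hu (by linarith : 0 < 1 + M / d) hdiag
  obtain ⟨q, hq₀, hq₁⟩ := exists_zpow_abs_mul_le hu (by linarith : 0 < 1 + M / d)
    (hoff.trans (by linarith))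
  refine ⟨p + q, p - q, ?_⟩
  intro i j
  rw [coe_zpow_diagHom_mul_mul]
  fin_cases i <;> fin_cases j
  · exact hp₀.trans (by linarith)
  · exact hq₀.trans (by linarith)
  · exact hq₁.trans (by linarith [sq_nonneg (u : ℝ)])
  · exact hp₁.trans (by linarith [sq_nonneg (u : ℝ)])

lemma exists_root_one_lt_sq {t : ℝ} (ht : 0 < t ^ 2 - 4) :
    ∃ l : ℝ, l ^ 2 - t * l + 1 = 0 ∧ 1 < l ^ 2 := by
  have hs := Real.sq_sqrt ht.le
  have hs₀ := Real.sqrt_pos.2 ht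
  obtain ht₀ | ht₀ := le_total 0 t
  · exact ⟨(t + √(t ^ 2 - 4)) / 2, by linear_combination hs / 4, by nlinarith⟩
  · exact ⟨(t - √(t ^ 2 - 4)) / 2, by linear_combination hs / 4, by nlinarith⟩

lemma exists_conj_eq_diagHom {A : SL2R} (hA : 0 < beta A) :
    ∃ (P : SL2R) (u : ℝˣ), P * A * P⁻¹ = diagHom u ∧ 1 < (u : ℝ) ^ 2 := by
  obtain ⟨l, hl, hl1⟩ := exists_root_one_lt_sq hA
  obtain ⟨P, h₀, h₁⟩ := exists_conj_upper_triangular hl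
  have hconj (S : SL2R) : S * P * A * (S * P)⁻¹ = S * (P * A * P⁻¹) * S⁻¹ := by group
  generalize P * A * P⁻¹ = T at h₀ h₁ hconj
  have hdet := det_fin_two_eq_one T
  rw [h₀, h₁, mul_zero, sub_zero] at hdet
  let u : ℝˣ := Units.mk l (T 1 1) hdet (by rwa [mul_comm])
  have hne : l - T 1 1 ≠ 0 := by
    intro h
    rw [← sub_eq_zero.1 h] at hdet
    linarith
  obtain ⟨x, hx⟩ : ∃ x, x * (l - T 1 1) = T 0 1 := ⟨_, div_mul_cancel₀ _ hne⟩
  refine ⟨shear x * P, u, ?_, hl1⟩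
  rw [hconj, mul_inv_eq_iff_eq_mul]
  apply Subtype.ext
  rw [Matrix.SpecialLinearGroup.coe_mul, Matrix.SpecialLinearGroup.coe_mul, coe_shear,
    coe_diagHom, Matrix.eta_fin_two T.1, h₀, h₁, Matrix.mul_fin_two, Matrix.mul_fin_two, ← hx]
  simp only [u, Units.inv_mk, mul_zero, mul_one, add_zero, one_mul, zero_mul, zero_add]
  congr! 4
  ring

lemma gammaProper_of_beta_ne_zero {A : SL2R} (hA : beta A ≠ 0) : GammaProper A := by
  obtain hneg | hpos := hA.lt_or_gt
  · obtain ⟨P, h₁, h₂, h₃⟩ := exists_conj_rotation hneg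
    exact (gammaProper_of_rotation h₁ h₂ h₃).of_conj
  · obtain ⟨P, u, h, hu⟩ := exists_conj_eq_diagHom hpos
    exact (h ▸ gammaProper_diagHom hu).of_conj

end Proper

/-! ### Jørgensen's inequality -/

section Jorgensen

variable {Γ : Subgroup SL2R} {A B : SL2R}

lemma finite_inter_of_isCompact (hΓ : IsDiscreteSubgroup Γ) {K : Set SL2R} (hK : IsCompact K) :
    (Γ ∩ K : Set SL2R).Finite := by
  obtain ⟨U, hU, h1U, hΓU⟩ := hΓ
  have hopen : IsOpen ({1} : Set Γ) := by
    have hval : Continuous fun γ : Γ ↦ γ.1.1 :=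
      Matrix.SpecialLinearGroup.isClosedEmbedding_val.continuous.comp continuous_subtype_val
    suffices h : ({1} : Set Γ) = (fun γ : Γ ↦ γ.1.1) ⁻¹' U by
      rw [h]
      exact hU.preimage hval
    refine (Set.eq_singleton_iff_unique_mem.2 ⟨?_, fun γ hγ ↦ ?_⟩).symm
    · exact h1U
    · exact Subtype.ext (hΓU γ γ.2 hγ)
  have hdisc : DiscreteTopology Γ := discreteTopology_of_isOpen_singleton_one hopen
  have hfin : ((↑) ⁻¹' K : Set Γ).Finite := by
    simpa using Γ.tendsto_coe_cofinite_of_discrete (isDiscrete_iff_discreteTopology.2 hdisc)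
      hK.compl_mem_cocompact
  rw [← Subtype.image_preimage_coe]
  exact hfin.image _

lemma finite_setOf_gamma (hΓ : IsDiscreteSubgroup Γ) (hA : A ∈ Γ) (hβ : beta A ≠ 0) (M : ℝ) :
    {x | |x| ≤ M ∧ ∃ B ∈ Γ, gamma A B = x}.Finite := by
  obtain ⟨K, hK, hKB⟩ := gammaProper_of_beta_ne_zero hβ M
  refine ((finite_inter_of_isCompact hΓ hK).image (gamma A)).subset ?_
  rintro _ ⟨hM, B, hB, rfl⟩
  obtain ⟨i, j, hij⟩ := hKB B hM
  refine ⟨A ^ i * B * A ^ j, ⟨mul_mem (mul_mem (zpow_mem hA i) hB) (zpow_mem hA j), hij⟩, ?_⟩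
  rw [gamma_mul_right_of_commute _ (Commute.self_zpow A j),
    gamma_mul_left_of_commute _ (Commute.self_zpow A i)]

-- If the inequality failed, `B ↦ B * A * B⁻¹` would make `|γ(A, B)|` strictly smaller forever.
theorem jorgensen_inequality (hΓ : IsDiscreteSubgroup Γ) (hA : A ∈ Γ) (hB : B ∈ Γ)
    (hβ : beta A ≠ 0) (hγ : gamma A B ≠ 0) (htr : tr B ≠ 0) :
    1 ≤ |beta A| + |gamma A B| := by
  by_contra! hlt
  let S : Set ℝ := {x | |beta A| + |x| < 1 ∧ x ≠ 0 ∧ ∃ C ∈ Γ, tr C ≠ 0 ∧ gamma A C = x}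
  have hS : S.Finite := by
    refine (finite_setOf_gamma hΓ hA hβ 1).subset ?_
    rintro x ⟨hx, -, C, hC, -, hCx⟩
    exact ⟨by linarith [abs_nonneg (beta A)], C, hC, hCx⟩
  obtain ⟨x, ⟨hx, hx₀, C, hC, htrC, rfl⟩, hmin⟩ :=
    Set.exists_min_image S abs hS ⟨_, hlt, hγ, B, hB, htr, rfl⟩
  have hdecr : |gamma A (C * A * C⁻¹)| < |gamma A C| := by
    rw [gamma_conj_right, abs_mul]
    refine mul_lt_of_lt_one_right (abs_pos.2 hx₀) ((abs_sub _ _).trans_lt ?_)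
    rwa [add_comm]
  have hCΓ : C * A * C⁻¹ ∈ Γ := mul_mem (mul_mem hC hA) (inv_mem hC)
  have htrA : tr A ≠ 0 := by
    intro h
    rw [beta, h] at hx
    norm_num at hx
    linarith [abs_nonneg (gamma A C)]
  refine (hmin _ ⟨by linarith, fun h ↦ ?_, _, hCΓ, by rwa [tr_conj], rfl⟩).not_gt hdecr
  exact not_commute_conj hβ hx₀ htrC (commute_of_gamma_eq_zero hΓ hA hCΓ h)

-- Jørgensen's inequality is applied to the commutator `[A, B]` and `B`, whose parameters are small
-- as soon as `γ(A, B)` is.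
lemma two_thirds_le_abs_gamma_mul (hΓ : IsDiscreteSubgroup Γ) (hA : A ∈ Γ) (hB : B ∈ Γ)
    (hβA : 0 ≤ beta A) (hβB : 0 ≤ beta B) (hγ : gamma A B ≠ 0) :
    2 / 3 ≤ |gamma A B| * (beta B + 4) := by
  by_contra! hlt
  have hsmall : |gamma A B| < 1 / 6 := by nlinarith [abs_nonneg (gamma A B)]
  have htrA : tr A ≠ 0 := fun h ↦ by rw [beta, h] at hβA; norm_num at hβA
  have htrB : tr B ≠ 0 := fun h ↦ by rw [beta, h] at hβB; norm_num at hβB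
  have hX : ⁅A, B⁆ ∈ Γ := mul_mem (mul_mem (mul_mem hA hB) (inv_mem hA)) (inv_mem hB)
  have hβX : beta ⁅A, B⁆ ≠ 0 := by
    rw [beta_commutator]
    exact mul_ne_zero hγ (by linarith [neg_abs_le (gamma A B)] : (0 : ℝ) < _).ne'
  have hγX : gamma ⁅A, B⁆ B ≠ 0 := by
    rw [gamma_commutator]
    obtain h | h := eq_or_ne (beta B) 0
    · rw [h, sub_zero]
      exact mul_ne_zero hγ hγ
    · rw [gamma_comm A, ← gamma_conj_right]
      refine fun h₀ ↦ not_commute_conj h (by rwa [gamma_comm]) htrA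
        (commute_of_gamma_eq_zero hΓ hB (mul_mem (mul_mem hA hB) (inv_mem hA)) h₀)
  have hJ := jorgensen_inequality hΓ hX hB hβX hγX htrB
  rw [beta_commutator, gamma_commutator, abs_mul, abs_mul, ← mul_add] at hJ
  have h₁ := abs_add_le (gamma A B) 4
  have h₂ := abs_sub (gamma A B) (beta B)
  rw [abs_of_nonneg hβB] at h₂
  rw [abs_of_pos (four_pos : (0 : ℝ) < 4)] at h₁
  nlinarith [abs_nonneg (gamma A B)]

end Jorgensen

/-! ### Pairs with `γ(A, ·)` far from `[0, β(A)]` -/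

section LargeParameter

lemma beta_nonneg {A : SL2R} (hA : 2 ≤ |A.1.trace|) : 0 ≤ beta A := by
  rw [beta, ← sq_abs]
  change 2 ≤ |tr A| at hA
  nlinarith

lemma two_le_abs_gamma_sq {Γ : Subgroup SL2R} (hΓ : IsDiscreteSubgroup Γ) {f g : SL2R}
    (hf : f ∈ Γ) (hg : g ∈ Γ) (hβf : 0 ≤ beta f) (hβg : 0 ≤ beta g) (hfg : ¬ Commute f g) :
    2 ≤ |gamma (f ^ 2) (g ^ 2)| := by
  have h := two_thirds_le_abs_gamma_mul hΓ hf hg hβf hβg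
    (mt (commute_of_gamma_eq_zero hΓ hf hg) hfg)
  rw [gamma_sq_left, gamma_sq_right, abs_mul, abs_mul, abs_of_nonneg (by linarith),
    abs_of_nonneg (by linarith)]
  nlinarith

variable {F G : SL2R}

lemma exists_gamma_le_or_le (hG : 0 ≤ beta G) (h : 2 ≤ |gamma F G|) :
    ∃ k ∈ ({G ^ 2, G * F * G⁻¹} : Set SL2R), gamma F k ≤ -4 ∨ beta F + 4 ≤ gamma F k := by
  obtain hneg | hpos := le_abs'.1 h
  · refine ⟨G ^ 2, by simp, Or.inl ?_⟩
    rw [gamma_sq_right]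
    nlinarith
  · obtain hlt | hle := lt_or_ge (4 * gamma F G) (beta F + 4)
    · refine ⟨G * F * G⁻¹, by simp, Or.inl ?_⟩
      rw [gamma_conj_right]
      nlinarith
    · refine ⟨G ^ 2, by simp, Or.inr ?_⟩
      rw [gamma_sq_right]
      nlinarith

lemma exists_conj_tr_mul_le_neg_two {k : SL2R} (h : gamma F k ≤ -4 ∨ beta F + 4 ≤ gamma F k) :
    ∃ e ∈ ({F, F⁻¹} : Set SL2R), tr (F * (k * e * k⁻¹)) ≤ -2 := by
  obtain h | h := h
  · refine ⟨F⁻¹, by simp, ?_⟩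
    rw [← mul_assoc, ← mul_assoc, ← commutatorElement_def]
    rw [gamma] at h
    linarith
  · refine ⟨F, by simp, ?_⟩
    rw [tr_mul_conj]
    linarith

end LargeParameter

/-! ### Ping-pong on the projective line -/

section PingPong

open scoped Pointwise OnePoint

lemma lift_monoidHom_comp {ι G H : Type*} [Group G] [Group H] (φ : G →* H) (a : ι → G) :
    FreeGroup.lift (φ ∘ a) = φ.comp (FreeGroup.lift a) := by
  ext i
  simp

lemma injective_lift_of_map {ι G H : Type*} [Group G] [Group H] (φ : G →* H) {a : ι → G}
    (h : Function.Injective (FreeGroup.lift (φ ∘ a))) : Function.Injective (FreeGroup.lift a) := by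
  rw [lift_monoidHom_comp, MonoidHom.coe_comp] at h
  exact h.of_comp

lemma smul_compl_Iio_subset {F : GL (Fin 2) ℝ} {s : ℝ} (hs : 2 ≤ s) (hF : F.1 = !![0, -1; 1, s]) :
    F • ((↑) '' Set.Iio (-1 : ℝ))ᶜ ⊆ ((↑) '' Set.Icc (-1 : ℝ) 0 : Set (OnePoint ℝ)) := by
  rintro _ ⟨x, hx, rfl⟩
  cases x with
  | infty => exact ⟨0, by simp, by simp [OnePoint.smul_infty_eq_ite, hF]⟩
  | coe x =>
    have hx' : -1 ≤ x := by simpa using hx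
    have hxs : 0 < x + s := by linarith
    refine ⟨-1 / (x + s), ⟨?_, ?_⟩, ?_⟩
    · rw [le_div_iff₀ hxs]
      linarith
    · exact div_nonpos_of_nonpos_of_nonneg (by norm_num) hxs.le
    · simp [OnePoint.smul_some_eq_ite, hF, hxs.ne']

lemma smul_compl_Ioo_subset {H : GL (Fin 2) ℝ} {t κ : ℝ} (ht : 2 ≤ t) (hκ : 0 < κ)
    (hH : H.1 = !![t, -κ; κ⁻¹, 0]) :
    H • ((↑) '' Set.Ioo 0 κ)ᶜ ⊆ (insert ∞ ((↑) '' Set.Ici κ) : Set (OnePoint ℝ)) := by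
  have htκ : κ + κ ≤ t * κ := by nlinarith
  rintro _ ⟨x, hx, rfl⟩
  cases x with
  | infty =>
    refine Or.inr ⟨t * κ, ?_, by simp [OnePoint.smul_infty_eq_ite, hH, hκ.ne']⟩
    rw [Set.mem_Ici]
    linarith
  | coe x =>
    obtain rfl | hx₀ := eq_or_ne x 0
    · exact Or.inl (by simp [OnePoint.smul_some_eq_ite, hH])
    refine Or.inr ⟨t * κ - κ ^ 2 / x, ?_, ?_⟩
    · have hx' : 0 < x → κ ≤ x := by simpa using hx
      have hle : κ ^ 2 / x ≤ κ := by
        obtain hneg | hpos := hx₀.lt_or_gt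
        · exact (div_nonpos_of_nonneg_of_nonpos (sq_nonneg κ) hneg.le).trans hκ.le
        · rw [div_le_iff₀ hpos, pow_two]
          exact mul_le_mul_of_nonneg_left (hx' hpos) hκ.le
      rw [Set.mem_Ici]
      linarith
    · have : t * κ - κ ^ 2 / x = (t * x - κ) / (κ⁻¹ * x) := by
        field_simp
      simp [OnePoint.smul_some_eq_ite, hH, hκ.ne', hx₀, this, sub_eq_add_neg]

lemma injective_lift_normal_form {F H : GL (Fin 2) ℝ} {s t κ : ℝ} (hs : 2 ≤ s) (ht : 2 ≤ t)
    (hκ : 0 < κ) (hF : F.1 = !![0, -1; 1, s]) (hH : H.1 = !![t, -κ; κ⁻¹, 0]) :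
    Function.Injective (FreeGroup.lift ![F, H]) := by
  let X : Fin 2 → Set (OnePoint ℝ) := ![(↑) '' Set.Icc (-1 : ℝ) 0, insert ∞ ((↑) '' Set.Ici κ)]
  let Y : Fin 2 → Set (OnePoint ℝ) := ![(↑) '' Set.Iio (-1 : ℝ), (↑) '' Set.Ioo 0 κ]
  have hX : ∀ i, ![F, H] i • (Y i)ᶜ ⊆ X i :=
    Fin.forall_fin_two.2 ⟨smul_compl_Iio_subset hs hF, smul_compl_Ioo_subset ht hκ hH⟩
  have hdisj {S T : Set ℝ} (h : ∀ x ∈ S, x ∉ T) :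
      Disjoint ((↑) '' S : Set (OnePoint ℝ)) ((↑) '' T) :=
    Set.disjoint_image_of_injective OnePoint.coe_injective (Set.disjoint_left.2 h)
  have hX₀₁ : Disjoint (X 0) (X 1) := by
    refine Set.disjoint_insert_right.2 ⟨OnePoint.infty_notMem_image_coe, hdisj ?_⟩
    exact fun x hx hx' ↦ (hκ.trans_le hx').not_ge hx.2
  have hY₀₁ : Disjoint (Y 0) (Y 1) :=
    hdisj fun x (hx : x < -1) hx' ↦ by linarith [hx'.1]
  have hXY : ∀ i j, Disjoint (X i) (Y j) := by
    simp only [Fin.forall_fin_two]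
    refine ⟨⟨hdisj ?_, hdisj ?_⟩,
      Set.disjoint_insert_left.2 ⟨OnePoint.infty_notMem_image_coe, hdisj ?_⟩,
      Set.disjoint_insert_left.2 ⟨OnePoint.infty_notMem_image_coe, hdisj ?_⟩⟩
    · exact fun x hx hx' ↦ hx.1.not_gt hx'
    · exact fun x hx hx' ↦ hx.2.not_gt hx'.1
    · exact fun x (hx : κ ≤ x) (hx' : x < -1) ↦ by linarith
    · exact fun x hx hx' ↦ hx'.2.not_ge hx
  have hpair {Z : Fin 2 → Set (OnePoint ℝ)} (h : Disjoint (Z 0) (Z 1)) :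
      Pairwise (Function.onFun Disjoint Z) := by
    simpa [Pairwise, Fin.forall_fin_two, Function.onFun] using ⟨h, h.symm⟩
  refine FreeGroup.injective_lift_of_ping_pong _ X Y ?_ (hpair hX₀₁) (hpair hY₀₁) hXY hX fun i ↦ ?_
  · exact Fin.forall_fin_two.2 ⟨⟨_, 0, by simp, rfl⟩, ⟨∞, Set.mem_insert _ _⟩⟩
  · rw [Pi.inv_apply, Set.smul_set_subset_iff_subset_inv_smul_set, inv_inv,
      ← Set.compl_subset_compl, compl_compl, ← Set.smul_set_compl]
    exact hX i

lemma mulVec_mulVec_self {R : Type*} [CommRing R] (A : SL(2, R)) (v : Fin 2 → R) :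
    A.1.mulVec (A.1.mulVec v) = tr A • A.1.mulVec v - v := by
  have h := congrArg (Matrix.mulVec · v) (congrArg (A.1 * ·) (coe_inv_eq_tr_smul_one_sub A))
  simp only [← Matrix.SpecialLinearGroup.coe_mul, mul_inv_cancel, mul_sub, mul_smul_comm, mul_one,
    Matrix.SpecialLinearGroup.coe_one, Matrix.one_mulVec, Matrix.sub_mulVec,
    Matrix.smul_mulVec] at h
  rw [Matrix.mulVec_mulVec, ← Matrix.SpecialLinearGroup.coe_mul]
  linear_combination (norm := module) h

variable {K : Type*} [Field K]

lemma sq_sub_tr_mul_add_one_eq_zero {A : SL(2, K)} {l : K} {v : Fin 2 → K} (hv : v ≠ 0)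
    (h : A.1.mulVec v = l • v) : l ^ 2 - tr A * l + 1 = 0 := by
  have h₀ := mulVec_mulVec_self A v
  rw [h, Matrix.mulVec_smul, h] at h₀
  refine (smul_eq_zero.1 ?_).resolve_right hv
  linear_combination (norm := module) h₀

lemma pos_of_mulVec_eq_smul {A : SL2R} {l : ℝ} {v : Fin 2 → ℝ} (hA : 0 ≤ tr A) (hv : v ≠ 0)
    (h : A.1.mulVec v = l • v) : 0 < l := by
  have := sq_sub_tr_mul_add_one_eq_zero hv h
  by_contra! hl
  nlinarith [mul_nonneg hA (neg_nonneg.2 hl)]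

lemma mul_transpose_of_eq {A : Matrix (Fin 2) (Fin 2) K} {v w : Fin 2 → K} {a b c d : K}
    (hv : A.mulVec v = a • v + c • w) (hw : A.mulVec w = b • v + d • w) :
    A * (Matrix.of ![v, w]).transpose = (Matrix.of ![v, w]).transpose * !![a, b; c, d] := by
  ext i j
  fin_cases j
  · simpa [Matrix.mul_apply, Matrix.mulVec, dotProduct, mul_comm] using congrFun hv i
  · simpa [Matrix.mul_apply, Matrix.mulVec, dotProduct, mul_comm] using congrFun hw i

lemma exists_pos_root_of_two_le {t : ℝ} (ht : 2 ≤ t) : ∃ κ : ℝ, 0 < κ ∧ κ ^ 2 - t * κ + 1 = 0 := by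
  have hs : 0 ≤ t ^ 2 - 4 := by nlinarith
  exact ⟨(t + √(t ^ 2 - 4)) / 2, by positivity, by linear_combination Real.sq_sqrt hs / 4⟩

lemma exists_conj_toGL_eq_normal_form {F H : SL2R} (hF : 0 ≤ tr F) (hH : 0 ≤ tr H)
    (hFH : tr (F * H) ≤ -2) :
    ∃ (P : GL (Fin 2) ℝ) (κ : ℝ), 0 < κ ∧
      (P⁻¹ * Matrix.SpecialLinearGroup.toGL F * P).1 = !![0, -1; 1, tr F] ∧
      (P⁻¹ * Matrix.SpecialLinearGroup.toGL H * P).1 = !![tr H, -κ; κ⁻¹, 0] := by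
  obtain ⟨κ, hκ, hroot⟩ : ∃ κ : ℝ, 0 < κ ∧ κ ^ 2 + tr (F * H) * κ + 1 = 0 := by
    simpa using exists_pos_root_of_two_le (le_neg_of_le_neg hFH)
  obtain ⟨v, hv₀, hHF⟩ : ∃ v ≠ 0, (H * F).1.mulVec v = (-κ) • v :=
    exists_mulVec_eq_smul (by rw [tr_mul_comm H F]; linear_combination hroot)
  rw [Matrix.SpecialLinearGroup.coe_mul, ← Matrix.mulVec_mulVec] at hHF
  obtain ⟨w, hFv⟩ : ∃ w, F.1.mulVec v = w := ⟨_, rfl⟩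
  rw [hFv] at hHF
  have hFw : F.1.mulVec w = (-1 : ℝ) • v + tr F • w := by
    have h := mulVec_mulVec_self F v
    rw [hFv] at h
    linear_combination (norm := module) h
  have hHv : H.1.mulVec v = tr H • v + κ⁻¹ • w := by
    have h := mulVec_mulVec_self H w
    rw [hHF, Matrix.mulVec_smul] at h
    refine smul_right_injective _ (neg_ne_zero.2 hκ.ne') (h.trans ?_)
    match_scalars <;> field_simp
  have hind : LinearIndependent ℝ ![v, w] := by
    refine (LinearIndependent.pair_iff' hv₀).2 fun l hl ↦ ?_
    have hl₀ : 0 < l := pos_of_mulVec_eq_smul hF hv₀ (hFv.trans hl.symm)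
    have : 0 < -κ / l := pos_of_mulVec_eq_smul hH hv₀ <| by
      rw [div_eq_inv_mul, mul_smul, ← hHF, ← hl, Matrix.mulVec_smul, inv_smul_smul₀ hl₀.ne']
    exact (div_neg_of_neg_of_pos (neg_neg_of_pos hκ) hl₀).not_gt this
  obtain ⟨P, hP⟩ : IsUnit (Matrix.of ![v, w]).transpose :=
    Matrix.linearIndependent_cols_iff_isUnit.1 hind
  have hconj {A : SL2R} {B : Matrix (Fin 2) (Fin 2) ℝ} (h : A.1 * P.1 = P.1 * B) :
      (P⁻¹ * Matrix.SpecialLinearGroup.toGL A * P).1 = B := by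
    rw [Units.val_mul, Units.val_mul, mul_assoc, Units.inv_mul_eq_iff_eq_mul]
    exact h
  refine ⟨P, κ, hκ, hconj ?_, hconj ?_⟩ <;> rw [hP]
  · exact mul_transpose_of_eq (by rw [hFv]; module) hFw
  · exact mul_transpose_of_eq hHv (by rw [hHF]; module)

lemma injective_lift_of_tr_mul_le_neg_two {F H : SL2R} (hF : 2 ≤ tr F) (hH : 2 ≤ tr H)
    (hFH : tr (F * H) ≤ -2) : Function.Injective (FreeGroup.lift ![F, H]) := by
  obtain ⟨P, κ, hκ, hF', hH'⟩ :=
    exists_conj_toGL_eq_normal_form (zero_le_two.trans hF) (zero_le_two.trans hH) hFH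
  let φ : SL2R →* GL (Fin 2) ℝ :=
    (MulAut.conj P⁻¹).toMonoidHom.comp Matrix.SpecialLinearGroup.toGL
  have hφ (A : SL2R) : φ A = P⁻¹ * Matrix.SpecialLinearGroup.toGL A * P := by simp [φ]
  rw [← hφ] at hF' hH'
  refine injective_lift_of_map φ ?_
  convert injective_lift_normal_form hF hH hκ hF' hH' using 3
  ext i
  fin_cases i <;> rfl

end PingPong

/-! ### Passing to `PSL(2)` -/

section Center

variable {n R : Type*} [Fintype n] [DecidableEq n] [CommRing R]

lemma pow_card_eq_one_of_mem_center {A : Matrix.SpecialLinearGroup n R}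
    (hA : A ∈ Subgroup.center (Matrix.SpecialLinearGroup n R)) : A ^ Fintype.card n = 1 := by
  obtain ⟨r, hr, hrA⟩ := Matrix.SpecialLinearGroup.mem_center_iff.1 hA
  refine Subtype.ext ?_
  rw [Matrix.SpecialLinearGroup.coe_pow, ← hrA, ← map_pow, hr, map_one,
    Matrix.SpecialLinearGroup.coe_one]

lemma injective_lift_mk_center [Nonempty n] {ι : Type*} {a : ι → Matrix.SpecialLinearGroup n R}
    (ha : Function.Injective (FreeGroup.lift a)) :
    Function.Injective
      (FreeGroup.lift
        (QuotientGroup.mk' (Subgroup.center (Matrix.SpecialLinearGroup n R)) ∘ a)) := by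
  rw [injective_iff_map_eq_one]
  intro w hw
  rw [lift_monoidHom_comp, MonoidHom.comp_apply, QuotientGroup.mk'_apply,
    QuotientGroup.eq_one_iff] at hw
  have hpow : w ^ Fintype.card n = 1 :=
    ha (by rw [map_pow, map_one, pow_card_eq_one_of_mem_center hw])
  exact (pow_eq_one_iff_left Fintype.card_ne_zero).1 hpow

end Center

/-! ### Words in the generators -/

section Words

open scoped Pointwise

variable {G : Type*} [Group G]

lemma inv_mem_pow_of_inv_eq {S : Set G} (hS : S⁻¹ = S) {n : ℕ} {a : G} (ha : a ∈ S ^ n) :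
    a⁻¹ ∈ S ^ n := by
  rw [← hS, inv_pow]
  exact Set.inv_mem_inv.2 ha

lemma exists_conj_mem_pow_le {f g k e : G}
    (hk : k ∈ ({(g ^ 2) ^ 2, g ^ 2 * f ^ 2 * (g ^ 2)⁻¹} : Set G))
    (he : e ∈ ({f ^ 2, (f ^ 2)⁻¹} : Set G)) :
    ∃ n ≤ 14, k * e * k⁻¹ ∈ ({f, f⁻¹, g, g⁻¹} : Set G) ^ n := by
  have hS : ({f, f⁻¹, g, g⁻¹} : Set G)⁻¹ = {f, f⁻¹, g, g⁻¹} := by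
    simp only [Set.inv_insert, Set.inv_singleton, inv_inv]
    rw [Set.insert_comm, Set.pair_comm g⁻¹]
  have hinv {n : ℕ} {a : G} := inv_mem_pow_of_inv_eq hS (n := n) (a := a)
  have hf : f ^ 2 ∈ ({f, f⁻¹, g, g⁻¹} : Set G) ^ 2 := Set.pow_mem_pow (by simp)
  have hg : g ^ 2 ∈ ({f, f⁻¹, g, g⁻¹} : Set G) ^ 2 := Set.pow_mem_pow (by simp)
  have he₂ : e ∈ ({f, f⁻¹, g, g⁻¹} : Set G) ^ 2 := by
    obtain rfl | rfl := he
    exacts [hf, hinv hf]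
  generalize ({f, f⁻¹, g, g⁻¹} : Set G) = S at *
  have hconj {m : ℕ} (hk : k ∈ S ^ m) : k * e * k⁻¹ ∈ S ^ (m + 2 + m) := by
    rw [pow_add, pow_add]
    exact Set.mul_mem_mul (Set.mul_mem_mul hk he₂) (hinv hk)
  obtain rfl | rfl := hk
  · refine ⟨10, by norm_num, hconj (m := 4) ?_⟩
    rw [pow_mul S 2 2]
    exact Set.pow_mem_pow hg
  · refine ⟨14, le_rfl, hconj (m := 6) ?_⟩
    rw [pow_add S 4 2, pow_add S 2 2]
    exact Set.mul_mem_mul (Set.mul_mem_mul hg hf) (hinv hg)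

lemma pow_subset_closure_pair (f g : G) (n : ℕ) :
    ({f, f⁻¹, g, g⁻¹} : Set G) ^ n ⊆ Subgroup.closure {f, g} := by
  have hf : f ∈ Subgroup.closure {f, g} := Subgroup.subset_closure (by simp)
  have hg : g ∈ Subgroup.closure {f, g} := Subgroup.subset_closure (by simp)
  refine Subgroup.pow_subset ?_
  rintro _ (rfl | rfl | rfl | rfl)
  exacts [hf, inv_mem hf, hg, inv_mem hg]

lemma virtuallyAbelian_closure_pair {f g : G} (h : Commute f g) :
    VirtuallyAbelian (Subgroup.closure {f, g}) := by
  have hcomm : IsMulCommutative (Subgroup.closure {f, g}) := by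
    refine Subgroup.isMulCommutative_closure ?_
    rintro x (rfl | rfl) y (rfl | rfl)
    exacts [rfl, h.eq, h.eq.symm, rfl]
  exact ⟨⊤, inferInstance, fun a _ b _ ↦ mul_comm' a b⟩

end Words

end QuantitativeTits

open QuantitativeTits in
open scoped Pointwise in
theorem quantitative_tits_alternative_general {f g : SL2R} (hf : 2 ≤ |f.1.trace|)
    (hg : 2 ≤ |g.1.trace|) (hΓ : IsDiscreteSubgroup (Subgroup.closure {f, g}))
    (hfg : ¬ Commute f g) :
    ∃ n ≤ 14, ∃ h ∈ ({f, f⁻¹, g, g⁻¹} : Set SL2R) ^ n,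
      Function.Injective (FreeGroup.lift ![QuotientGroup.mk' (Subgroup.center SL2R) (f ^ 2),
        QuotientGroup.mk' (Subgroup.center SL2R) h]) := by
  have hγ := two_le_abs_gamma_sq hΓ (Subgroup.subset_closure (by simp))
    (Subgroup.subset_closure (by simp)) (beta_nonneg hf) (beta_nonneg hg) hfg
  have hβ : 0 ≤ beta (g ^ 2) := by
    have := beta_nonneg hg
    rw [beta_sq]
    positivity
  have htr : 2 ≤ tr (f ^ 2) := by
    have := beta_nonneg hf
    rw [beta] at this
    rw [tr_sq]
    linarith
  obtain ⟨k, hk, hkγ⟩ := exists_gamma_le_or_le hβ hγ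
  obtain ⟨e, he, hFe⟩ := exists_conj_tr_mul_le_neg_two hkγ
  have htre : 2 ≤ tr (k * e * k⁻¹) := by
    rw [tr_conj]
    obtain rfl | rfl := he
    exacts [htr, htr.trans_eq (tr_inv _).symm]
  obtain ⟨n, hn, hword⟩ := exists_conj_mem_pow_le hk he
  refine ⟨n, hn, _, hword, ?_⟩
  convert injective_lift_mk_center (injective_lift_of_tr_mul_le_neg_two htr htre hFe) using 3
  ext i
  fin_cases i <;> rfl

/-- Main Theorem 1.1 of the paper for `X = ℍ²`: a uniform constant `C` such that any
nonelementary discrete two-generated subgroup of `SL(2,ℝ)` with non-elliptic generators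
`f, g` contains, within word length `C`, an element `h` and a power `f^N` (`N ≤ C`)
whose images in `PSL(2,ℝ) = SL(2,ℝ)/{±1}` generate a free group of rank two. -/
theorem quantitative_tits_alternative :
    ∃ C : ℕ, 0 < C ∧ ∀ f g : SL2R,
      NonElliptic f → NonElliptic g →
      IsDiscreteSubgroup (Subgroup.closure {f, g}) →
      ¬ VirtuallyAbelian ↥(Subgroup.closure ({f, g} : Set SL2R)) →
      ∃ h ∈ Subgroup.closure ({f, g} : Set SL2R),
        (∃ (n : ℕ) (w : Fin n → SL2R), n ≤ C ∧
          (∀ i, w i ∈ ({f, f⁻¹, g, g⁻¹} : Set SL2R)) ∧ h = (List.ofFn w).prod) ∧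
        ∃ N : ℕ, 0 < N ∧ N ≤ C ∧
          Function.Injective
            ⇑(FreeGroup.lift
                ![QuotientGroup.mk' (Subgroup.center SL2R) (f ^ N),
                  QuotientGroup.mk' (Subgroup.center SL2R) h] :
              FreeGroup (Fin 2) →* SL2R ⧸ Subgroup.center SL2R) := by
  refine ⟨14, by norm_num, fun f g hf hg hΓ hna ↦ ?_⟩
  obtain ⟨n, hn, h, hh, hinj⟩ := quantitative_tits_alternative_general hf.1 hg.1 hΓ
    (mt QuantitativeTits.virtuallyAbelian_closure_pair hna)
  obtain ⟨w, rfl⟩ := Set.mem_pow.1 hh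
  exact ⟨_, QuantitativeTits.pow_subset_closure_pair f g n hh,
    ⟨n, fun i ↦ w i, hn, fun i ↦ (w i).2, rfl⟩, 2, two_pos, by norm_num, hinj⟩
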